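/- Fix constants R*, ε, η, B > 0. There exists n₀ = n₀(ε, η, R*, B) such that for every n ≥ n₀ there exist a rate R ≤ R* + ε, an encoder f : ℝⁿ × 𝕊₊ⁿ × [0,1] → {1,…,⌊2^{nR}⌋}, a decoder g : {1,…,⌊2^{nR}⌋} × [0,1] → ℝⁿ, and a random variable S uniform on [0,1] such that for every positive semidefinite Σ ∈ ℝ^{n×n} with tr(Σ) = n and eigenvalues λ, setting Ŵ = g(f(W, Σ, S), S) for W ~ N(0, Iₙ) independent of S: Pr_S[ E_W[(1/n) d_Σ(W, Ŵ)] ≤ 𝐃_rc(λ, R*) + η ] ≥ 1 − exp(−n^B). -/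

import Mathlib

open MeasureTheory Matrix Real

/-- Standard Gaussian measure `N(0, I_n)` on `ℝⁿ`. -/
noncomputable def stdGaussian (n : ℕ) : Measure (Fin n → ℝ) :=
  Measure.pi fun _ => ProbabilityTheory.gaussianReal 0 1

/-- Distortion `d_Σ(w, v) = (w - v)ᵀ Σ (w - v)`. -/
noncomputable def dSig {n : ℕ} (Sig : Matrix (Fin n) (Fin n) ℝ) (w v : Fin n → ℝ) : ℝ :=
  (w - v) ⬝ᵥ Sig.mulVec (w - v)

/-- Random-coding distortion `D_rc(λ, T) = (1/n) Σᵢ λᵢ/(1 + λᵢ T)`. -/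
noncomputable def Drc {n : ℕ} (lam : Fin n → ℝ) (T : ℝ) : ℝ :=
  (1 / (n : ℝ)) * ∑ i, lam i / (1 + lam i * T)

/-- Random-coding rate `R_rc(λ, T) = (1/(2n)) Σᵢ log₂(1 + λᵢ T)`. -/
noncomputable def Rrc {n : ℕ} (lam : Fin n → ℝ) (T : ℝ) : ℝ :=
  (1 / (2 * (n : ℝ))) * ∑ i, Real.logb 2 (1 + lam i * T)

/-- `T_rc(λ, R)`: the unique `T > 0` with `R_rc(λ, T) = R`. -/
noncomputable def Trc {n : ℕ} (lam : Fin n → ℝ) (R : ℝ) : ℝ :=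
  Classical.epsilon fun T => 0 < T ∧ Rrc lam T = R

/-- `𝐃_rc(λ, R) = D_rc(λ, T_rc(λ, R))`. -/
noncomputable def DDrc {n : ℕ} (lam : Fin n → ℝ) (R : ℝ) : ℝ :=
  Drc lam (Trc lam R)


/-! ### Change of measure -/

lemma aux_pi_withDensity {n : ℕ} (μ : Fin n → Measure ℝ) [∀ i, IsProbabilityMeasure (μ i)]
    (d : Fin n → ℝ → ENNReal) (hd : ∀ i, Measurable (d i))
    [∀ i, SigmaFinite ((μ i).withDensity (d i))] :
    Measure.pi (fun i => (μ i).withDensity (d i)) =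
      (Measure.pi μ).withDensity (fun x => ∏ i, d i (x i)) := by
  refine (Measure.pi_eq fun s hs => ?_)
  rw [withDensity_apply _ (MeasurableSet.univ_pi hs)]
  rw [← lintegral_indicator (MeasurableSet.univ_pi hs)]
  have h1 : (Set.univ.pi s).indicator (fun x : Fin n → ℝ => ∏ i, d i (x i)) =
      fun x => ∏ i, (s i).indicator (d i) (x i) := by
    ext x
    by_cases hx : x ∈ Set.univ.pi s
    · rw [Set.indicator_of_mem hx]
      refine Finset.prod_congr rfl fun i _ => ?_
      rw [Set.indicator_of_mem (hx i (Set.mem_univ i))]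
    · rw [Set.indicator_of_notMem hx]
      simp only [Set.mem_pi, Set.mem_univ, true_implies, not_forall] at hx
      obtain ⟨i, hi⟩ := hx
      refine (Finset.prod_eq_zero (Finset.mem_univ i) ?_).symm
      exact Set.indicator_of_notMem hi _
  rw [h1]
  have hm : ∀ i, Measurable ((s i).indicator (d i)) := fun i => (hd i).indicator (hs i)
  rw [ProbabilityTheory.lintegral_prod_eq_prod_lintegral_of_indepFun Finset.univ
    (fun i (x : Fin n → ℝ) => (s i).indicator (d i) (x i))
    (ProbabilityTheory.iIndepFun_pi fun i => (hm i).aemeasurable)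
    (fun i => (hm i).comp (measurable_pi_apply i))]
  refine Finset.prod_congr rfl fun i _ => ?_
  rw [withDensity_apply _ (hs i), ← lintegral_indicator (hs i)]
  have := (measurePreserving_eval μ i).lintegral_comp (hm i)
  exact this

lemma aux_map_withDensity_comp {α β : Type*} [MeasurableSpace α] [MeasurableSpace β]
    (μ : Measure α) (φ : α → β) (hφ : Measurable φ) (e : β → ENNReal) (he : Measurable e) :
    (μ.withDensity (e ∘ φ)).map φ = (μ.map φ).withDensity e := by
  ext s hs
  rw [Measure.map_apply hφ hs, withDensity_apply _ (hφ hs), withDensity_apply _ hs,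
    setLIntegral_map hs he hφ]
  rfl

lemma aux_1d (a ρ : ℝ) (hρ : 0 < ρ) :
    ((ProbabilityTheory.gaussianReal 0 1).withDensity
      (fun x => ENNReal.ofReal (ρ * rexp ((x ^ 2 - (a + ρ * x) ^ 2) / 2)))).map
        (fun x => a + ρ * x) = ProbabilityTheory.gaussianReal 0 1 := by
  set v : NNReal := NNReal.mk (ρ ^ 2) (sq_nonneg _) with hv
  have hv0 : v ≠ 0 := by
    intro h
    have : (v : ℝ) = 0 := by rw [h]; rfl
    rw [hv] at this
    have h2 : ρ ^ 2 = 0 := this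
    nlinarith [pow_pos hρ 2]
  have hvr : (v : ℝ) = ρ ^ 2 := rfl
  let e : ℝ → ENNReal := fun y => ENNReal.ofReal
    (ProbabilityTheory.gaussianPDFReal 0 1 y / ProbabilityTheory.gaussianPDFReal a v y)
  have he : Measurable e := by
    refine ENNReal.measurable_ofReal.comp ?_
    exact (ProbabilityTheory.measurable_gaussianPDFReal _ _).div
      (ProbabilityTheory.measurable_gaussianPDFReal _ _)
  have h1 : (fun x => ENNReal.ofReal (ρ * rexp ((x ^ 2 - (a + ρ * x) ^ 2) / 2))) =
      e ∘ (fun x => a + ρ * x) := by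
    funext x
    simp only [e, Function.comp]
    congr 1
    simp only [ProbabilityTheory.gaussianPDFReal, hvr]
    rw [Real.sqrt_mul (by positivity) (ρ ^ 2), Real.sqrt_sq hρ.le]
    have h2 : rexp (-(a + ρ * x - a) ^ 2 / (2 * ρ ^ 2)) = rexp (-x ^ 2 / 2) := by
      congr 1; field_simp; ring
    rw [h2]
    have h3 : rexp ((x ^ 2 - (a + ρ * x) ^ 2) / 2) =
        rexp (-(a + ρ * x - 0) ^ 2 / (2 * (1 : NNReal))) / rexp (-x ^ 2 / 2) := by
      rw [← Real.exp_sub]; congr 1; push_cast; ring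
    rw [h3]
    have : √(2 * π) ≠ 0 := by positivity
    simp only [NNReal.coe_one, mul_one]
    field_simp
  rw [h1, aux_map_withDensity_comp _ _ (by fun_prop) _ he]
  have h4 : (ProbabilityTheory.gaussianReal 0 1).map (fun x => a + ρ * x) =
      ProbabilityTheory.gaussianReal a v := by
    have := ProbabilityTheory.gaussianReal_map_const_mul (μ := 0) (v := 1) ρ
    have h5 : (fun x => a + ρ * x) = (fun x => a + x) ∘ (fun x => ρ * x) := rfl
    rw [h5, ← Measure.map_map (by fun_prop) (by fun_prop), this,
      ProbabilityTheory.gaussianReal_map_const_add]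
    simp [hv]
  rw [h4, ProbabilityTheory.gaussianReal_of_var_ne_zero _ hv0,
    ProbabilityTheory.gaussianReal_of_var_ne_zero _ one_ne_zero,
    ← withDensity_mul _ (ProbabilityTheory.measurable_gaussianPDF _ _) he]
  congr 1
  funext y
  simp only [Pi.mul_apply, e, ProbabilityTheory.gaussianPDF]
  rw [← ENNReal.ofReal_mul (ProbabilityTheory.gaussianPDFReal_nonneg _ _ _)]
  congr 1
  have := ProbabilityTheory.gaussianPDFReal_pos a v y hv0
  field_simp

instance aux_std_prob (n : ℕ) : IsProbabilityMeasure (stdGaussian n) := by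
  unfold stdGaussian; infer_instance

/-- Change of measure lower bound. -/
lemma aux_change {n : ℕ} (a ρ : Fin n → ℝ) (hρ : ∀ i, 0 < ρ i) (A : Set (Fin n → ℝ))
    (hA : MeasurableSet A) (t : ℝ) :
    ENNReal.ofReal (rexp (-t)) * stdGaussian n {x | (fun i => a i + ρ i * x i) ∈ A ∧
      ∑ i, (-Real.log (ρ i) + ((a i + ρ i * x i) ^ 2 - x i ^ 2) / 2) ≤ t} ≤
      stdGaussian n A := by
  let d : Fin n → ℝ → ENNReal := fun i x =>
    ENNReal.ofReal (ρ i * rexp ((x ^ 2 - (a i + ρ i * x) ^ 2) / 2))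
  have hd : ∀ i, Measurable (d i) := fun i => by
    refine ENNReal.measurable_ofReal.comp ?_
    fun_prop
  have hfin : ∀ i, IsProbabilityMeasure
      ((ProbabilityTheory.gaussianReal 0 1).withDensity (d i)) := fun i => by
    constructor
    have h := aux_1d (a i) (ρ i) (hρ i)
    have h2 : (((ProbabilityTheory.gaussianReal 0 1).withDensity (d i)).map
        (fun x => a i + ρ i * x)) Set.univ = 1 := by
      rw [h]; exact measure_univ
    rwa [Measure.map_apply (by fun_prop) MeasurableSet.univ, Set.preimage_univ] at h2
  have hpi : (Measure.pi fun i => (ProbabilityTheory.gaussianReal 0 1).withDensity (d i)) =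
      (stdGaussian n).withDensity (fun x => ∏ i, d i (x i)) :=
    aux_pi_withDensity _ d hd
  have hφ : Measurable (fun (x : Fin n → ℝ) i => a i + ρ i * x i) := by fun_prop
  have hsf : ∀ i, SigmaFinite (((ProbabilityTheory.gaussianReal 0 1).withDensity (d i)).map
      (fun x => a i + ρ i * x)) := fun i => by
    rw [aux_1d (a i) (ρ i) (hρ i)]; infer_instance
  have hmap : (stdGaussian n) = ((stdGaussian n).withDensity (fun x => ∏ i, d i (x i))).map
      (fun (x : Fin n → ℝ) i => a i + ρ i * x i) := by
    rw [← hpi, Measure.pi_map_pi (f := fun i x => a i + ρ i * x)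
      (fun i => by fun_prop)]
    unfold stdGaussian
    congr 1
    funext i
    exact (aux_1d (a i) (ρ i) (hρ i)).symm
  have h5 : stdGaussian n A = ((stdGaussian n).withDensity (fun x => ∏ i, d i (x i)))
      ((fun (x : Fin n → ℝ) i => a i + ρ i * x i) ⁻¹' A) := by
    conv_lhs => rw [hmap]
    rw [Measure.map_apply hφ hA]
  rw [h5]
  set S := {x : Fin n → ℝ | (fun i => a i + ρ i * x i) ∈ A ∧
      ∑ i, (-Real.log (ρ i) + ((a i + ρ i * x i) ^ 2 - x i ^ 2) / 2) ≤ t} with hS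
  have hSm : MeasurableSet S := by
    refine (hφ hA).inter (measurableSet_le (f := fun x : Fin n → ℝ =>
      ∑ i, (-Real.log (ρ i) + ((a i + ρ i * x i) ^ 2 - x i ^ 2) / 2)) (g := fun _ => t) ?_ ?_)
    · fun_prop
    · fun_prop
  refine le_trans ?_ (measure_mono (μ := (stdGaussian n).withDensity (fun x => ∏ i, d i (x i)))
    (show S ⊆ (fun (x : Fin n → ℝ) i => a i + ρ i * x i) ⁻¹' A from fun x hx => hx.1))
  rw [withDensity_apply _ hSm, ← setLIntegral_const]
  refine setLIntegral_mono' hSm fun x hx => ?_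
  have h6 : ∏ i, d i (x i) = ENNReal.ofReal (rexp (-∑ i, (-Real.log (ρ i) +
      ((a i + ρ i * x i) ^ 2 - x i ^ 2) / 2))) := by
    rw [← Finset.sum_neg_distrib, Real.exp_sum, ENNReal.ofReal_prod_of_nonneg
      (fun i _ => (Real.exp_pos _).le)]
    refine Finset.prod_congr rfl fun i _ => ?_
    simp only [d]
    congr 1
    rw [show -(-Real.log (ρ i) + ((a i + ρ i * x i) ^ 2 - x i ^ 2) / 2) =
      Real.log (ρ i) + (x i ^ 2 - (a i + ρ i * x i) ^ 2) / 2 by ring, Real.exp_add,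
      Real.exp_log (hρ i)]
  rw [h6]
  refine ENNReal.ofReal_le_ofReal (Real.exp_le_exp.mpr ?_)
  linarith [hx.2]

/-! ### Rotation invariance and the Chebyshev inequality -/

lemma aux_rot {n : ℕ} (V : Matrix (Fin n) (Fin n) ℝ) (hV : Vᵀ * V = 1) :
    MeasurePreserving (fun w => V *ᵥ w) (stdGaussian n) (stdGaussian n) := by
  have hm : Measurable (fun w : Fin n → ℝ => V *ᵥ w) :=
    (Continuous.matrix_mulVec continuous_const continuous_id).measurable
  refine ⟨hm, ?_⟩
  let L : EuclideanSpace ℝ (Fin n) →ₗᵢ[ℝ] EuclideanSpace ℝ (Fin n) :=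
    { toLinearMap := Matrix.toEuclideanLin V
      norm_map' := by
        intro x
        have h : ‖Matrix.toEuclideanLin V x‖ ^ 2 = ‖x‖ ^ 2 := by
          rw [EuclideanSpace.real_norm_sq_eq, EuclideanSpace.real_norm_sq_eq]
          have h1 : ∑ i, (Matrix.toEuclideanLin V x).ofLp i ^ 2 =
              (V *ᵥ x.ofLp) ⬝ᵥ (V *ᵥ x.ofLp) := by
            simp [dotProduct, sq, Matrix.toLpLin_apply]
          have h2 : ∑ i, x.ofLp i ^ 2 = x.ofLp ⬝ᵥ x.ofLp := by
            simp [dotProduct, sq]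
          rw [h1, h2, Matrix.dotProduct_mulVec, Matrix.vecMul_mulVec, ← Matrix.mulVec_transpose]
          simp [hV]
        exact (pow_left_inj₀ (norm_nonneg _) (norm_nonneg _) two_ne_zero).mp h }
  let E := L.toLinearIsometryEquiv rfl
  have hmt : Measurable (WithLp.toLp 2 : (Fin n → ℝ) → EuclideanSpace ℝ (Fin n)) := by fun_prop
  have hmo : Measurable (WithLp.ofLp : EuclideanSpace ℝ (Fin n) → (Fin n → ℝ)) := by fun_prop
  have h0 : (stdGaussian n).map (WithLp.toLp 2) =
      ProbabilityTheory.stdGaussian (EuclideanSpace ℝ (Fin n)) :=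
    ProbabilityTheory.map_pi_eq_stdGaussian
  have h1 := ProbabilityTheory.stdGaussian_map E
  rw [← h0, Measure.map_map E.continuous.measurable hmt] at h1
  have h2 : (⇑E ∘ WithLp.toLp 2) = (WithLp.toLp 2) ∘ (fun w : Fin n → ℝ => V *ᵥ w) := by
    funext w
    simp only [Function.comp]
    change Matrix.toEuclideanLin V (WithLp.toLp 2 w) = _
    simp [Matrix.toLpLin_apply]
  rw [h2, ← Measure.map_map hmt hm] at h1
  have h3 := congrArg (Measure.map WithLp.ofLp) h1
  rw [Measure.map_map hmo hmt, Measure.map_map hmo hmt] at h3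
  have h4 : (WithLp.ofLp ∘ WithLp.toLp 2 : (Fin n → ℝ) → (Fin n → ℝ)) = id := rfl
  rw [h4, Measure.map_id, Measure.map_id] at h3
  exact h3

/-- One-dimensional standard Gaussian. -/
noncomputable abbrev g1 : Measure ℝ := ProbabilityTheory.gaussianReal 0 1

lemma aux_memLp_fst : MemLp (fun z : ℝ × ℝ => z.1) 4 (g1.prod g1) :=
  (ProbabilityTheory.memLp_id_gaussianReal' (μ := 0) (v := 1) 4 (by simp)).comp_measurePreserving
    measurePreserving_fst

lemma aux_memLp_snd : MemLp (fun z : ℝ × ℝ => z.2) 4 (g1.prod g1) :=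
  (ProbabilityTheory.memLp_id_gaussianReal' (μ := 0) (v := 1) 4 (by simp)).comp_measurePreserving
    measurePreserving_snd

lemma aux_mul_L2 {Ω : Type*} [MeasurableSpace Ω] {μ : Measure Ω} {f g : Ω → ℝ}
    (hf : MemLp f 4 μ) (hg : MemLp g 4 μ) : MemLp (fun x => f x * g x) 2 μ := by
  have : ENNReal.HolderTriple 4 4 2 := by
    constructor
    rw [← two_mul, show (4 : ENNReal) = 2 * 2 by norm_num, ENNReal.mul_inv (by simp) (by simp),
      ← mul_assoc, ENNReal.mul_inv_cancel (by simp) (by simp), one_mul]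
  exact MemLp.mul hg hf

lemma aux_sq_mean : ∫ x, x * x ∂g1 = 1 := by
  have h := ProbabilityTheory.variance_fun_id_gaussianReal (μ := 0) (v := 1)
  rw [ProbabilityTheory.variance_eq_integral measurable_id'.aemeasurable] at h
  simpa [sq] using h

lemma aux_quad_memLp (p q t : ℝ) :
    MemLp (fun z : ℝ × ℝ => p * (z.1 * z.1) + q * (z.1 * z.2) + t * (z.2 * z.2)) 2
      (g1.prod g1) :=
  (((aux_mul_L2 aux_memLp_fst aux_memLp_fst).const_mul p).add
    ((aux_mul_L2 aux_memLp_fst aux_memLp_snd).const_mul q)).add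
    ((aux_mul_L2 aux_memLp_snd aux_memLp_snd).const_mul t)

lemma aux_quad_mean (p q t : ℝ) :
    ∫ z, (p * (z.1 * z.1) + q * (z.1 * z.2) + t * (z.2 * z.2)) ∂(g1.prod g1) = p + t := by
  have i1 : Integrable (fun z : ℝ × ℝ => z.1 * z.1) (g1.prod g1) :=
    (aux_mul_L2 aux_memLp_fst aux_memLp_fst).integrable (by norm_num)
  have i2 : Integrable (fun z : ℝ × ℝ => z.1 * z.2) (g1.prod g1) :=
    (aux_mul_L2 aux_memLp_fst aux_memLp_snd).integrable (by norm_num)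
  have i3 : Integrable (fun z : ℝ × ℝ => z.2 * z.2) (g1.prod g1) :=
    (aux_mul_L2 aux_memLp_snd aux_memLp_snd).integrable (by norm_num)
  have i12 : Integrable (fun z : ℝ × ℝ => p * (z.1 * z.1) + q * (z.1 * z.2)) (g1.prod g1) :=
    (i1.const_mul p).add (i2.const_mul q)
  rw [integral_add i12 (i3.const_mul t),
    integral_add (i1.const_mul p) (i2.const_mul q), integral_const_mul, integral_const_mul,
    integral_const_mul]
  have e1 : ∫ z : ℝ × ℝ, z.1 * z.1 ∂(g1.prod g1) = 1 := by
    have := integral_prod_mul (μ := g1) (ν := g1) (fun x : ℝ => x * x) (fun _ : ℝ => (1 : ℝ))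
    simpa [aux_sq_mean] using this
  have e3 : ∫ z : ℝ × ℝ, z.2 * z.2 ∂(g1.prod g1) = 1 := by
    have := integral_prod_mul (μ := g1) (ν := g1) (fun _ : ℝ => (1 : ℝ)) (fun x : ℝ => x * x)
    simpa [aux_sq_mean] using this
  have e2 : ∫ z : ℝ × ℝ, z.1 * z.2 ∂(g1.prod g1) = 0 := by
    have := integral_prod_mul (μ := g1) (ν := g1) (fun x : ℝ => x) (fun x : ℝ => x)
    simpa using this
  rw [e1, e2, e3]; ring

/-- A universal constant bounding second moments of quadratic forms. -/
noncomputable def quadC : ℝ :=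
  ∫ z : ℝ × ℝ, (2 * (z.1 * z.1) + 0 * (z.1 * z.2) + 2 * (z.2 * z.2)) ^ 2 ∂(g1.prod g1)

lemma aux_quad_var (p q t b : ℝ) (hp : |p| ≤ b) (hq : |q| ≤ b) (ht : |t| ≤ b) :
    ProbabilityTheory.variance
      (fun z : ℝ × ℝ => p * (z.1 * z.1) + q * (z.1 * z.2) + t * (z.2 * z.2)) (g1.prod g1)
      ≤ b ^ 2 * quadC := by
  have hm := aux_quad_memLp p q t
  refine (ProbabilityTheory.variance_le_expectation_sq hm.aestronglyMeasurable).trans ?_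
  rw [quadC, ← integral_const_mul]
  refine integral_mono hm.integrable_sq ((aux_quad_memLp 2 0 2).integrable_sq.const_mul _) ?_
  intro z
  simp only [Pi.pow_apply]
  rw [← mul_pow]
  apply sq_le_sq'
  · have h1 := (abs_le.mp hp).1
    have h2 := (abs_le.mp hq).1
    have h2' := (abs_le.mp hq).2
    have h3 := (abs_le.mp ht).1
    nlinarith [sq_nonneg (z.1 + z.2), sq_nonneg (z.1 - z.2), sq_nonneg z.1, sq_nonneg z.2,
      mul_nonneg (by linarith : 0 ≤ b + q) (sq_nonneg (z.1 + z.2)),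
      mul_nonneg (by linarith : 0 ≤ b - q) (sq_nonneg (z.1 - z.2)),
      mul_nonneg (by linarith : 0 ≤ b + p) (sq_nonneg z.1),
      mul_nonneg (by linarith : 0 ≤ b + t) (sq_nonneg z.2)]
  · have h1 := (abs_le.mp hp).2
    have h2 := (abs_le.mp hq).1
    have h2' := (abs_le.mp hq).2
    have h3 := (abs_le.mp ht).2
    nlinarith [sq_nonneg (z.1 + z.2), sq_nonneg (z.1 - z.2), sq_nonneg z.1, sq_nonneg z.2,
      mul_nonneg (by linarith : 0 ≤ b + q) (sq_nonneg (z.1 - z.2)),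
      mul_nonneg (by linarith : 0 ≤ b - q) (sq_nonneg (z.1 + z.2)),
      mul_nonneg (by linarith : 0 ≤ b - p) (sq_nonneg z.1),
      mul_nonneg (by linarith : 0 ≤ b - t) (sq_nonneg z.2)]

/-- Chebyshev for sums of quadratic forms in independent Gaussian pairs. -/
lemma aux_cheb {n : ℕ} (hn : 0 < n) (p q t : Fin n → ℝ) (b κ : ℝ) (hκ : 0 < κ)
    (hp : ∀ i, |p i| ≤ b) (hq : ∀ i, |q i| ≤ b) (ht : ∀ i, |t i| ≤ b) :
    ((stdGaussian n).prod (stdGaussian n)) {z | ∑ i, (p i + t i) + n * κ ≤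
      ∑ i, (p i * (z.1 i * z.1 i) + q i * (z.1 i * z.2 i) + t i * (z.2 i * z.2 i))} ≤
      ENNReal.ofReal (b ^ 2 * quadC / (n * κ ^ 2)) := by
  have hn' : (0 : ℝ) < n := by exact_mod_cast hn
  let X : Fin n → ℝ × ℝ → ℝ := fun i z =>
    p i * (z.1 * z.1) + q i * (z.1 * z.2) + t i * (z.2 * z.2)
  have hX : ∀ i, MemLp (X i) 2 (g1.prod g1) := fun i => aux_quad_memLp _ _ _
  let P : Measure (Fin n → ℝ × ℝ) := Measure.pi (fun _ => g1.prod g1)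
  have hmp := measurePreserving_arrowProdEquivProdArrow ℝ ℝ (Fin n) (fun _ => g1) (fun _ => g1)
  have hXi : ∀ i, MemLp (fun ω : Fin n → ℝ × ℝ => X i (ω i)) 2 P := fun i =>
    (hX i).comp_measurePreserving (measurePreserving_eval (fun _ : Fin n => g1.prod g1) i)
  have hsum : MemLp (∑ i, fun ω : Fin n → ℝ × ℝ => X i (ω i)) 2 P :=
    memLp_finsetSum' _ fun i _ => hXi i
  have hmean : ∫ ω, (∑ i, fun ω : Fin n → ℝ × ℝ => X i (ω i)) ω ∂P = ∑ i, (p i + t i) := by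
    simp only [Finset.sum_apply]
    rw [integral_finsetSum _ fun i _ => (hXi i).integrable (by norm_num)]
    refine Finset.sum_congr rfl fun i _ => ?_
    rw [← aux_quad_mean (p i) (q i) (t i)]
    have h1 := (measurePreserving_eval (fun _ : Fin n => g1.prod g1) i).map_eq
    have h2 : AEStronglyMeasurable (X i)
        (Measure.map (Function.eval i) (Measure.pi fun _ : Fin n => g1.prod g1)) := by
      rw [h1]; exact (hX i).aestronglyMeasurable
    rw [← h1]
    exact (integral_map (measurable_pi_apply i).aemeasurable h2).symm
  have hvar : ProbabilityTheory.variance (∑ i, fun ω : Fin n → ℝ × ℝ => X i (ω i)) P ≤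
      n * (b ^ 2 * quadC) := by
    rw [ProbabilityTheory.variance_sum_pi hX]
    refine (Finset.sum_le_sum fun i _ =>
      aux_quad_var (p i) (q i) (t i) b (hp i) (hq i) (ht i)).trans ?_
    simp
  have hch := ProbabilityTheory.meas_ge_le_variance_div_sq hsum (c := n * κ) (by positivity)
  rw [hmean] at hch
  have hms : MeasurableSet {z : (Fin n → ℝ) × (Fin n → ℝ) | ∑ i, (p i + t i) + n * κ ≤
      ∑ i, (p i * (z.1 i * z.1 i) + q i * (z.1 i * z.2 i) + t i * (z.2 i * z.2 i))} := by
    apply measurableSet_le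
    · fun_prop
    · fun_prop
  have h2 := hmp.measure_preimage hms.nullMeasurableSet
  change ((Measure.pi fun _ => g1).prod (Measure.pi fun _ => g1)) _ ≤ _
  rw [← h2]
  refine (measure_mono ?_).trans (hch.trans (ENNReal.ofReal_le_ofReal ?_))
  · intro ω hω
    have h3 : ∑ i, (p i + t i) + n * κ ≤ ∑ i, X i (ω i) := hω
    simp only [Set.mem_ofPred_eq, Finset.sum_apply]
    exact le_trans (by linarith) (le_abs_self _)
  · rw [div_le_div_iff₀ (by positivity) (by positivity)]
    have : 0 < (n : ℝ) * κ ^ 2 := by positivity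
    nlinarith

/-! ### Choice of the single-letter parameters -/

lemma aux_exists_ge_one {n : ℕ} (hn : 0 < n) (lam : Fin n → ℝ) (hs : ∑ i, lam i = n) :
    ∃ i, 1 ≤ lam i := by
  by_contra! h
  have hne : (Finset.univ : Finset (Fin n)).Nonempty := ⟨⟨0, hn⟩, Finset.mem_univ _⟩
  have : ∑ i, lam i < ∑ _i : Fin n, (1 : ℝ) := Finset.sum_lt_sum_of_nonempty hne fun i _ => h i
  simp [hs] at this

lemma aux_Trc {n : ℕ} (hn : 0 < n) (lam : Fin n → ℝ) (h0 : ∀ i, 0 ≤ lam i)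
    (hs : ∑ i, lam i = n) (R : ℝ) (hR : 0 < R) : 0 < Trc lam R ∧ Rrc lam (Trc lam R) = R := by
  have hn' : (0 : ℝ) < n := by exact_mod_cast hn
  refine Classical.epsilon_spec (p := fun T => 0 < T ∧ Rrc lam T = R) ?_
  obtain ⟨j, hj⟩ := aux_exists_ge_one hn lam hs
  let T1 : ℝ := (2 : ℝ) ^ (2 * n * R)
  have hT1 : 0 < T1 := by positivity
  have hcont : ContinuousOn (Rrc lam) (Set.Icc 0 T1) := by
    unfold Rrc Real.logb
    refine ContinuousOn.mul continuousOn_const (continuousOn_finsetSum _ fun i _ => ?_)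
    refine ContinuousOn.div_const (ContinuousOn.log (by fun_prop) fun x hx => ?_) _
    have := mul_nonneg (h0 i) hx.1
    positivity
  have hz : Rrc lam 0 = 0 := by simp [Rrc]
  have hone : R ≤ Rrc lam T1 := by
    unfold Rrc
    have h1 : ∀ i, 0 ≤ Real.logb 2 (1 + lam i * T1) := fun i =>
      Real.logb_nonneg (by norm_num) (by nlinarith [mul_nonneg (h0 i) hT1.le])
    have h2 : Real.logb 2 (1 + lam j * T1) ≤ ∑ i, Real.logb 2 (1 + lam i * T1) :=
      Finset.single_le_sum (f := fun i => Real.logb 2 (1 + lam i * T1)) (fun i _ => h1 i)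
        (Finset.mem_univ j)
    have h3 : 2 * n * R ≤ Real.logb 2 (1 + lam j * T1) := by
      rw [Real.le_logb_iff_rpow_le (by norm_num) (by nlinarith)]
      change T1 ≤ _
      nlinarith
    rw [div_mul_eq_mul_div, one_mul, le_div_iff₀ (by positivity)]
    linarith
  have := intermediate_value_Icc hT1.le hcont
  obtain ⟨T, hT, hTR⟩ := this ⟨by rw [hz]; exact hR.le, hone⟩
  refine ⟨T, lt_of_le_of_ne hT.1 ?_, hTR⟩
  rintro rfl
  rw [hz] at hTR
  linarith

set_option maxHeartbeats 1600000 in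
lemma aux_params (Rstar θ Tm : ℝ) (K : ℕ) (hR : 0 < Rstar) (hθ : 0 < θ) (hθ1 : θ < 1)
    (hTm : 0 < Tm) (hK : 0 < K) {n : ℕ} (hn : 0 < n) (lam : Fin n → ℝ) (h0 : ∀ i, 0 ≤ lam i)
    (hs : ∑ i, lam i = n) :
    ∃ (u : Fin n → ℝ) (k : Fin K),
      (∀ i, 0 ≤ u i ∧ u i < 1) ∧
      θ * min (2 * (Rstar * Real.log 2)) Tm / (1 + θ * min (2 * (Rstar * Real.log 2)) Tm) ≤
        ((k : ℕ) + 1 : ℝ) / K ∧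
      (∀ i, lam i * (1 - u i) ≤ 1 / min (2 * (Rstar * Real.log 2)) Tm + θ) ∧
      ∑ i, lam i * ((1 - u i) ^ 2 + ((k : ℕ) + 1 : ℝ) / K * (1 - u i)) ≤
        n * (DDrc lam Rstar + 1 / Tm + 1 / K + 2 * θ) ∧
      ∑ i, (-(Real.log (1 - u i)) / 2) ≤ n * (Rstar * Real.log 2) ∧
      ∑ i, (u i ^ 2 / (((k : ℕ) + 1 : ℝ) / K) - u i) ≤ 0 := by
  have hn' : (0 : ℝ) < n := by exact_mod_cast hn
  have hK' : (0 : ℝ) < K := by exact_mod_cast hK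
  have hl2 : 0 < Real.log 2 := Real.log_pos (by norm_num)
  obtain ⟨hTpos, hTR⟩ := aux_Trc hn lam h0 hs Rstar hR
  unfold DDrc
  set T := Trc lam Rstar with hTdef
  set τ := min (2 * (Rstar * Real.log 2)) Tm with hτdef
  have hτ : 0 < τ := by
    rw [hτdef]; exact lt_min (by positivity) hTm
  -- the rate in natural logarithms
  have hrate : ∑ i, Real.log (1 + lam i * T) = 2 * n * (Rstar * Real.log 2) := by
    unfold Rrc Real.logb at hTR
    rw [← Finset.sum_div] at hTR
    field_simp at hTR
    linarith
  have hTlow : 2 * (Rstar * Real.log 2) ≤ T := by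
    have h1 : ∑ i, Real.log (1 + lam i * T) ≤ ∑ i, lam i * T := by
      refine Finset.sum_le_sum fun i _ => ?_
      have := Real.log_le_sub_one_of_pos (x := 1 + lam i * T)
        (by linarith [mul_nonneg (h0 i) hTpos.le])
      linarith
    rw [hrate, ← Finset.sum_mul, hs] at h1
    nlinarith
  set T' := min T Tm with hT'def
  have hT'τ : τ ≤ T' := min_le_min_right _ hTlow
  have hT'pos : 0 < T' := lt_of_lt_of_le hτ hT'τ
  have hT'T : T' ≤ T := min_le_left _ _
  let y : Fin n → ℝ := fun i => if θ < lam i then lam i * T' else 0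
  have hy0 : ∀ i, 0 ≤ y i := fun i => by
    simp only [y]; split_ifs
    · exact mul_nonneg (h0 i) hT'pos.le
    · exact le_rfl
  have hyT : ∀ i, y i ≤ lam i * T := fun i => by
    simp only [y]; split_ifs
    · exact mul_le_mul_of_nonneg_left hT'T (h0 i)
    · exact mul_nonneg (h0 i) hTpos.le
  let u : Fin n → ℝ := fun i => y i / (1 + y i)
  have h1u : ∀ i, 1 - u i = 1 / (1 + y i) := fun i => by
    have := hy0 i
    simp only [u]; field_simp; ring
  have hu0 : ∀ i, 0 ≤ u i := fun i => div_nonneg (hy0 i) (by linarith [hy0 i])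
  have hu1 : ∀ i, u i < 1 := fun i => by
    have h2 : 0 < 1 - u i := by rw [h1u]; have := hy0 i; positivity
    linarith
  set c := θ * τ / (1 + θ * τ) with hc
  have hc0 : 0 < c := by positivity
  have huc : ∀ i, θ < lam i → c ≤ u i := fun i hi => by
    have hyi : θ * τ ≤ y i := by
      simp only [y, if_pos hi]
      exact mul_le_mul hi.le hT'τ hτ.le (h0 i)
    have := hy0 i
    simp only [u, hc]
    rw [div_le_div_iff₀ (by positivity) (by positivity)]
    nlinarith
  have huz : ∀ i, ¬ θ < lam i → u i = 0 := fun i hi => by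
    simp [u, y, if_neg hi]
  obtain ⟨j, hj⟩ := aux_exists_ge_one hn lam hs
  have huj : 0 < u j := lt_of_lt_of_le hc0 (huc j (by linarith))
  have hSu : 0 < ∑ i, u i :=
    lt_of_lt_of_le huj (Finset.single_le_sum (fun i _ => hu0 i) (Finset.mem_univ j))
  set σ := (∑ i, u i ^ 2) / ∑ i, u i with hσ
  have hσS : σ * ∑ i, u i = ∑ i, u i ^ 2 := by rw [hσ]; field_simp
  have hσc : c ≤ σ := by
    rw [hσ, le_div_iff₀ hSu, Finset.mul_sum]
    refine Finset.sum_le_sum fun i _ => ?_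
    by_cases hi : θ < lam i
    · nlinarith [huc i hi, hu0 i]
    · rw [huz i hi]; simp
  have hσ1 : σ ≤ 1 := by
    rw [hσ, div_le_one hSu]
    exact Finset.sum_le_sum fun i _ => by nlinarith [hu0 i, hu1 i]
  have hσ0 : 0 < σ := lt_of_lt_of_le hc0 hσc
  -- rounding up the variance
  obtain ⟨k, hk1, hk2⟩ : ∃ k : Fin K, σ ≤ ((k : ℕ) + 1 : ℝ) / K ∧
      ((k : ℕ) + 1 : ℝ) / K ≤ σ + 1 / K := by
    have hcl : 0 < ⌈σ * K⌉₊ := Nat.ceil_pos.mpr (by positivity)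
    have hcl2 : ⌈σ * K⌉₊ ≤ K := Nat.ceil_le.mpr (by nlinarith)
    refine ⟨⟨⌈σ * K⌉₊ - 1, by omega⟩, ?_, ?_⟩
    · have : ((⌈σ * K⌉₊ - 1 : ℕ) : ℝ) + 1 = ⌈σ * K⌉₊ := by
        rw [Nat.cast_sub hcl]; simp
      simp only [this]
      rw [le_div_iff₀ hK']
      exact Nat.le_ceil _
    · have : ((⌈σ * K⌉₊ - 1 : ℕ) : ℝ) + 1 = ⌈σ * K⌉₊ := by
        rw [Nat.cast_sub hcl]; simp
      simp only [this]
      rw [div_le_iff₀ hK', add_mul, one_div, inv_mul_cancel₀ hK'.ne']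
      exact (Nat.ceil_lt_add_one (by positivity)).le
  set s := ((k : ℕ) + 1 : ℝ) / K with hsdef
  have hs0 : 0 < s := lt_of_lt_of_le hσ0 hk1
  have hs1 : s ≤ 1 := by
    rw [hsdef, div_le_one hK']
    have := k.2
    exact_mod_cast this
  refine ⟨u, k, fun i => ⟨hu0 i, hu1 i⟩, hσc.trans hk1, ?_, ?_, ?_, ?_⟩
  · intro i
    by_cases hi : θ < lam i
    · have h3 : lam i * (1 - u i) ≤ 1 / τ := by
        rw [h1u, mul_one_div, div_le_div_iff₀ (by linarith [hy0 i]) hτ]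
        have : y i = lam i * T' := by simp only [y, if_pos hi]
        rw [this]
        nlinarith [h0 i]
      linarith
    · rw [huz i hi]
      have : 0 ≤ 1 / τ := by positivity
      push Not at hi
      linarith
  · -- the distortion
    have hterm : ∀ i, lam i * ((1 - u i) ^ 2 + s * (1 - u i)) ≤
        (1 / T') * (u i * (1 - u i + σ)) + lam i * (1 / K) + 2 * θ := fun i => by
      by_cases hi : θ < lam i
      · have hyi : y i = lam i * T' := by simp only [y, if_pos hi]
        have h3 : lam i * (1 - u i) = (1 / T') * u i := by
          rw [h1u]; simp only [u]; rw [hyi]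
          field_simp
        have h4 : lam i * ((1 - u i) ^ 2 + s * (1 - u i)) =
            (1 / T') * (u i * (1 - u i + σ)) + lam i * (1 - u i) * (s - σ) := by
          have : lam i * ((1 - u i) ^ 2 + s * (1 - u i)) =
            (lam i * (1 - u i)) * (1 - u i + σ) + lam i * (1 - u i) * (s - σ) := by ring
          rw [this, h3]; ring
        have h5 : lam i * (1 - u i) * (s - σ) ≤ lam i * (1 / K) := by
          have h6 : lam i * (1 - u i) ≤ lam i :=
            mul_le_of_le_one_right (h0 i) (by linarith [hu0 i])
          have h7 : 0 ≤ lam i * (1 - u i) := mul_nonneg (h0 i) (by linarith [hu1 i])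
          exact mul_le_mul h6 (by linarith) (by linarith) (h0 i)
        rw [h4]; linarith
      · rw [huz i hi]
        push Not at hi
        have h5 : 0 ≤ lam i * (1 / K) := mul_nonneg (h0 i) (by positivity)
        have h6 : lam i * s ≤ lam i := mul_le_of_le_one_right (h0 i) hs1
        have h7 : lam i * ((1 - 0) ^ 2 + s * (1 - 0)) = lam i + lam i * s := by ring
        rw [h7, zero_mul, mul_zero]
        linarith
    refine (Finset.sum_le_sum fun i _ => hterm i).trans ?_
    rw [Finset.sum_add_distrib, Finset.sum_add_distrib, ← Finset.mul_sum, ← Finset.sum_mul, hs]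
    have h8 : ∑ i, u i * (1 - u i + σ) = ∑ i, u i := by
      have : ∀ i, u i * (1 - u i + σ) = u i - u i ^ 2 + σ * u i := fun i => by ring
      simp_rw [this]
      rw [Finset.sum_add_distrib, Finset.sum_sub_distrib, ← Finset.mul_sum, hσS]; ring
    rw [h8]
    have h9 : 1 / T' * ∑ i, u i ≤ n * (Drc lam T + 1 / Tm) := by
      have hD0 : 0 ≤ n * Drc lam T := by
        unfold Drc
        refine mul_nonneg hn'.le (mul_nonneg (by positivity) (Finset.sum_nonneg fun i _ => ?_))
        exact div_nonneg (h0 i) (by linarith [mul_nonneg (h0 i) hTpos.le])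
      rcases le_total T Tm with h | h
      · have hT' : T' = T := min_eq_left h
        have h10 : 1 / T' * ∑ i, u i ≤ n * Drc lam T := by
          unfold Drc
          rw [← mul_assoc, mul_one_div, div_self hn'.ne', one_mul, Finset.mul_sum]
          refine Finset.sum_le_sum fun i _ => ?_
          by_cases hi : θ < lam i
          · have hyi : y i = lam i * T' := by simp only [y, if_pos hi]
            simp only [u]; rw [hyi, hT']
            have := mul_nonneg (h0 i) hTpos.le
            apply le_of_eq
            field_simp
          · rw [huz i hi, mul_zero]
            exact div_nonneg (h0 i) (by linarith [mul_nonneg (h0 i) hTpos.le])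
        have : 0 ≤ n * (1 / Tm) := by positivity
        linarith
      · have hT' : T' = Tm := min_eq_right h
        have h10 : ∑ i, u i ≤ n := by
          refine (Finset.sum_le_sum fun i _ => (hu1 i).le).trans ?_
          simp
        rw [hT']
        have : 1 / Tm * ∑ i, u i ≤ 1 / Tm * n := mul_le_mul_of_nonneg_left h10 (by positivity)
        linarith
    simp only [Finset.sum_const, Finset.card_univ, Fintype.card_fin, nsmul_eq_mul]
    linarith
  · -- the rate
    have h3 : ∀ i, -(Real.log (1 - u i)) / 2 ≤ Real.log (1 + lam i * T) / 2 := fun i => by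
      rw [h1u, one_div, Real.log_inv, neg_neg]
      have := Real.log_le_log (by linarith [hy0 i]) (by linarith [hyT i] : 1 + y i ≤ 1 + lam i * T)
      linarith
    refine (Finset.sum_le_sum fun i _ => h3 i).trans ?_
    rw [← Finset.sum_div, hrate]
    apply le_of_eq; ring
  · rw [Finset.sum_sub_distrib, ← Finset.sum_div, sub_nonpos, div_le_iff₀ hs0, ← hσS, mul_comm]
    exact mul_le_mul_of_nonneg_left hk1 hSu.le

/-! ### Most source words have many good codewords -/

set_option maxHeartbeats 1600000 in
lemma aux_core (Rstar ε η δ : ℝ) (hR : 0 < Rstar) (hε : 0 < ε) (hη : 0 < η) (hδ : 0 < δ) :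
    ∃ K : ℕ, 0 < K ∧ ∃ n0 : ℕ, ∀ n : ℕ, n0 ≤ n → ∀ lam : Fin n → ℝ, (∀ i, 0 ≤ lam i) →
      ∑ i, lam i = n → ∃ k : Fin K,
        stdGaussian n {w | stdGaussian n {G | ∑ i, lam i *
          (w i - √(((k : ℕ) + 1 : ℝ) / K) * G i) ^ 2 ≤ n * (DDrc lam Rstar + η)} <
            ENNReal.ofReal (rexp (-(n * (Rstar * Real.log 2 + ε))) / 2)} ≤ ENNReal.ofReal δ := by
  set θ : ℝ := min (η / 16) (1 / 2) with hθdef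
  have hθ : 0 < θ := lt_min (by positivity) (by norm_num)
  have hθ1 : θ < 1 := lt_of_le_of_lt (min_le_right _ _) (by norm_num)
  have hθη : θ ≤ η / 16 := min_le_left _ _
  set Tm : ℝ := 8 / η with hTmdef
  have hTm : 0 < Tm := by positivity
  have hTmη : 1 / Tm = η / 8 := by rw [hTmdef, one_div_div]
  set K : ℕ := ⌈8 / η⌉₊ + 1 with hKdef
  have hK : 0 < K := Nat.succ_pos _
  have hK' : (0 : ℝ) < K := by exact_mod_cast hK
  have hKη : 1 / (K : ℝ) ≤ η / 8 := by
    have h1 : 8 / η ≤ (K : ℝ) := by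
      rw [hKdef]; push_cast
      linarith [Nat.le_ceil (8 / η)]
    rw [div_le_iff₀ hη] at h1
    rw [div_le_div_iff₀ hK' (by norm_num)]
    linarith
  have hl2 : 0 < Real.log 2 := Real.log_pos (by norm_num)
  set τ := min (2 * (Rstar * Real.log 2)) Tm with hτdef
  have hτ : 0 < τ := by
    rw [hτdef]; exact lt_min (by positivity) hTm
  set c := θ * τ / (1 + θ * τ) with hc
  have hc0 : 0 < c := by positivity
  set b1 := 2 * (1 / τ + θ) with hb1
  set b2 := 1 / c with hb2
  set Z := b1 ^ 2 * quadC / (η / 2) ^ 2 + b2 ^ 2 * quadC / ε ^ 2 with hZ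
  have hq0 : 0 ≤ quadC := by
    unfold quadC
    exact integral_nonneg fun z => sq_nonneg _
  have hZ0 : 0 ≤ Z := by positivity
  refine ⟨K, hK, ⌈2 * Z / δ⌉₊ + 1, fun n hn lam h0 hs => ?_⟩
  have hnpos : 0 < n := by omega
  have hn' : (0 : ℝ) < n := by exact_mod_cast hnpos
  have hnZ : 2 * Z / δ ≤ n := by
    have h1 : ((⌈2 * Z / δ⌉₊ + 1 : ℕ) : ℝ) ≤ n := by exact_mod_cast hn
    push_cast at h1
    linarith [Nat.le_ceil (2 * Z / δ)]
  obtain ⟨u, k, hu, hcs, hlu, hdist, hrate, hneg⟩ :=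
    aux_params Rstar θ Tm K hR hθ hθ1 hTm hK hnpos lam h0 hs
  rw [← hτdef] at hcs hlu
  rw [← hc] at hcs
  refine ⟨k, ?_⟩
  set s := ((k : ℕ) + 1 : ℝ) / K with hsdef
  have hs0 : 0 < s := lt_of_lt_of_le hc0 hcs
  have hs1 : s ≤ 1 := by
    rw [hsdef, div_le_one hK']
    have := k.2
    exact_mod_cast this
  have hu0 : ∀ i, 0 ≤ u i := fun i => (hu i).1
  have hu1 : ∀ i, u i < 1 := fun i => (hu i).2
  have hρ : ∀ i, 0 < √(1 - u i) := fun i => Real.sqrt_pos.mpr (by linarith [hu1 i])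
  have hρ1 : ∀ i, √(1 - u i) ≤ 1 := fun i => Real.sqrt_le_one.mpr (by linarith [hu0 i])
  have hρsq : ∀ i, √(1 - u i) ^ 2 = 1 - u i := fun i => Real.sq_sqrt (by linarith [hu1 i])
  have hss : 0 < √s := Real.sqrt_pos.mpr hs0
  have hss1 : √s ≤ 1 := Real.sqrt_le_one.mpr hs1
  have hsssq : √s ^ 2 = s := Real.sq_sqrt hs0.le
  -- coefficients
  let p1 : Fin n → ℝ := fun i => lam i * (1 - u i) ^ 2
  let q1 : Fin n → ℝ := fun i => -(2 * (lam i * (1 - u i)) * (√s * √(1 - u i)))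
  let t1 : Fin n → ℝ := fun i => lam i * (s * (1 - u i))
  let p2 : Fin n → ℝ := fun i => u i ^ 2 / s / 2
  let q2 : Fin n → ℝ := fun i => u i * √(1 - u i) / √s
  let t2 : Fin n → ℝ := fun i => -u i / 2
  have hl0 : ∀ i, 0 ≤ lam i * (1 - u i) := fun i => mul_nonneg (h0 i) (by linarith [hu1 i])
  have hss2 : ∀ i, √s * √(1 - u i) ≤ 1 := fun i =>
    mul_le_one₀ hss1 (hρ i).le (hρ1 i)
  have hp1 : ∀ i, |p1 i| ≤ b1 := fun i => by
    have h1 : p1 i = lam i * (1 - u i) * (1 - u i) := by simp only [p1]; ring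
    have h2 : lam i * (1 - u i) * (1 - u i) ≤ lam i * (1 - u i) :=
      mul_le_of_le_one_right (hl0 i) (by linarith [hu0 i])
    rw [h1, abs_of_nonneg (mul_nonneg (hl0 i) (by linarith [hu1 i]))]
    linarith [hlu i, hl0 i]
  have hq1 : ∀ i, |q1 i| ≤ b1 := fun i => by
    simp only [q1]
    rw [abs_neg, abs_of_nonneg (mul_nonneg (mul_nonneg (by norm_num) (hl0 i))
      (mul_nonneg hss.le (hρ i).le))]
    have h2 : 2 * (lam i * (1 - u i)) * (√s * √(1 - u i)) ≤ 2 * (lam i * (1 - u i)) :=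
      mul_le_of_le_one_right (by linarith [hl0 i]) (hss2 i)
    linarith [hlu i]
  have ht1 : ∀ i, |t1 i| ≤ b1 := fun i => by
    have h1 : t1 i = lam i * (1 - u i) * s := by simp only [t1]; ring
    have h2 : lam i * (1 - u i) * s ≤ lam i * (1 - u i) := mul_le_of_le_one_right (hl0 i) hs1
    rw [h1, abs_of_nonneg (mul_nonneg (hl0 i) hs0.le)]
    linarith [hlu i, hl0 i]
  have hsb : 1 / s ≤ b2 := one_div_le_one_div_of_le hc0 hcs
  have hb21 : 1 ≤ b2 := by
    have : 1 ≤ 1 / s := by rw [le_div_iff₀ hs0]; linarith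
    linarith
  have hp2 : ∀ i, |p2 i| ≤ b2 := fun i => by
    have h3 : u i ^ 2 / s ≤ 1 / s :=
      div_le_div_of_nonneg_right (by nlinarith [hu0 i, hu1 i]) hs0.le
    have h4 : 0 ≤ u i ^ 2 / s := by positivity
    simp only [p2]
    rw [abs_of_nonneg (by linarith)]
    linarith
  have hq2 : ∀ i, |q2 i| ≤ b2 := fun i => by
    have h3 : u i * √(1 - u i) / √s ≤ 1 / s := by
      rw [div_le_div_iff₀ hss hs0]
      have h5 : u i * √(1 - u i) ≤ 1 := mul_le_one₀ (hu1 i).le (hρ i).le (hρ1 i)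
      have h6 : s ≤ √s := by nlinarith
      have h7 : u i * √(1 - u i) * s ≤ s := mul_le_of_le_one_left hs0.le h5
      linarith
    have h4 : 0 ≤ u i * √(1 - u i) / √s := div_nonneg (mul_nonneg (hu0 i) (hρ i).le) hss.le
    simp only [q2]
    rw [abs_of_nonneg h4]
    linarith
  have ht2 : ∀ i, |t2 i| ≤ b2 := fun i => by
    simp only [t2]
    rw [abs_le]
    constructor <;> linarith [hu0 i, hu1 i]
  set B1 : Set ((Fin n → ℝ) × (Fin n → ℝ)) := {z | ∑ i, (p1 i + t1 i) + n * (η / 2) ≤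
      ∑ i, (p1 i * (z.1 i * z.1 i) + q1 i * (z.1 i * z.2 i) + t1 i * (z.2 i * z.2 i))} with hB1
  set B2 : Set ((Fin n → ℝ) × (Fin n → ℝ)) := {z | ∑ i, (p2 i + t2 i) + n * ε ≤
      ∑ i, (p2 i * (z.1 i * z.1 i) + q2 i * (z.1 i * z.2 i) + t2 i * (z.2 i * z.2 i))} with hB2
  have hB1m : MeasurableSet B1 := measurableSet_le (by fun_prop) (by fun_prop)
  have hB2m : MeasurableSet B2 := measurableSet_le (by fun_prop) (by fun_prop)
  have hBm : MeasurableSet (B1 ∪ B2) := hB1m.union hB2m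
  have hprob : ((stdGaussian n).prod (stdGaussian n)) (B1 ∪ B2) ≤ ENNReal.ofReal (δ / 2) := by
    refine (measure_union_le _ _).trans ?_
    refine (add_le_add (aux_cheb hnpos p1 q1 t1 b1 (η / 2) (by positivity) hp1 hq1 ht1)
      (aux_cheb hnpos p2 q2 t2 b2 ε hε hp2 hq2 ht2)).trans ?_
    rw [← ENNReal.ofReal_add (by positivity) (by positivity)]
    refine ENNReal.ofReal_le_ofReal ?_
    have h1 : b1 ^ 2 * quadC / (n * (η / 2) ^ 2) + b2 ^ 2 * quadC / (n * ε ^ 2) = Z / n := by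
      rw [hZ]; field_simp
    rw [h1, div_le_div_iff₀ hn' (by norm_num)]
    rw [div_le_iff₀ hδ] at hnZ
    linarith
  have hmark : stdGaussian n {w | (1 / 2 : ENNReal) ≤ stdGaussian n (Prod.mk w ⁻¹' (B1 ∪ B2))} ≤
      ENNReal.ofReal δ := by
    have h1 := mul_meas_ge_le_lintegral (μ := stdGaussian n)
      (measurable_measure_prodMk_left (ν := stdGaussian n) hBm) (1 / 2)
    rw [← Measure.prod_apply hBm] at h1
    have h2 := h1.trans hprob
    have h3 : ENNReal.ofReal δ = 2 * ENNReal.ofReal (δ / 2) := by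
      rw [show (2 : ENNReal) = ENNReal.ofReal 2 by simp, ← ENNReal.ofReal_mul (by norm_num)]
      congr 1; ring
    rw [h3]
    refine le_trans (le_of_eq ?_) (mul_le_mul_right h2 2)
    rw [← mul_assoc, one_div, ENNReal.mul_inv_cancel (by simp) (by simp), one_mul]
  refine (measure_mono ?_).trans hmark
  intro w hw
  by_contra hcon
  simp only [Set.mem_ofPred_eq, not_le] at hcon hw
  set A : Set (Fin n → ℝ) := {G | ∑ i, lam i * (w i - √s * G i) ^ 2 ≤
    n * (DDrc lam Rstar + η)} with hA
  have hAm : MeasurableSet A := measurableSet_le (by fun_prop) (by fun_prop)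
  have hchg := aux_change (fun i => u i * w i / √s) (fun i => √(1 - u i)) hρ A hAm
    (n * (Rstar * Real.log 2 + ε))
  have hsub : (Prod.mk w ⁻¹' (B1 ∪ B2))ᶜ ⊆ {x | (fun i => u i * w i / √s + √(1 - u i) * x i) ∈ A ∧
      ∑ i, (-Real.log (√(1 - u i)) + ((u i * w i / √s + √(1 - u i) * x i) ^ 2 - x i ^ 2) / 2)
        ≤ n * (Rstar * Real.log 2 + ε)} := by
    intro x hx
    have hx1 : ¬ (w, x) ∈ B1 := fun h => hx (Or.inl h)
    have hx2 : ¬ (w, x) ∈ B2 := fun h => hx (Or.inr h)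
    simp only [hB1, hB2, Set.mem_ofPred_eq, not_le] at hx1 hx2
    constructor
    · simp only [hA, Set.mem_ofPred_eq]
      have h1 : ∑ i, lam i * (w i - √s * (u i * w i / √s + √(1 - u i) * x i)) ^ 2 =
          ∑ i, (p1 i * (w i * w i) + q1 i * (w i * x i) + t1 i * (x i * x i)) := by
        refine Finset.sum_congr rfl fun i _ => ?_
        have h2 : √s * (u i * w i / √s + √(1 - u i) * x i) =
            u i * w i + √s * √(1 - u i) * x i := by field_simp
        rw [h2]
        simp only [p1, q1, t1]
        have h3 : lam i * (s * (1 - u i)) = lam i * (√s ^ 2 * √(1 - u i) ^ 2) := by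
          rw [hρsq, hsssq]
        rw [h3]; ring
      rw [h1]
      refine hx1.le.trans ?_
      have h4 : ∑ i, (p1 i + t1 i) = ∑ i, lam i * ((1 - u i) ^ 2 + s * (1 - u i)) :=
        Finset.sum_congr rfl fun i _ => by simp only [p1, t1]; ring
      rw [h4]
      have h5 : n * (DDrc lam Rstar + 1 / Tm + 1 / K + 2 * θ) + n * (η / 2) ≤
          n * (DDrc lam Rstar + η) := by
        rw [← mul_add]
        refine mul_le_mul_of_nonneg_left ?_ hn'.le
        linarith
      linarith
    · have h1 : ∑ i, (-Real.log (√(1 - u i)) +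
          ((u i * w i / √s + √(1 - u i) * x i) ^ 2 - x i ^ 2) / 2) =
          ∑ i, (-(Real.log (1 - u i)) / 2) +
          ∑ i, (p2 i * (w i * w i) + q2 i * (w i * x i) + t2 i * (x i * x i)) := by
        rw [← Finset.sum_add_distrib]
        refine Finset.sum_congr rfl fun i _ => ?_
        rw [Real.log_sqrt (by linarith [hu1 i])]
        simp only [p2, q2, t2]
        have h3 : (u i * w i / √s + √(1 - u i) * x i) ^ 2 = u i ^ 2 / (√s ^ 2) * w i ^ 2 +
            2 * (u i * √(1 - u i) / √s) * (w i * x i) + √(1 - u i) ^ 2 * x i ^ 2 := by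
          field_simp; ring
        rw [h3, hρsq, hsssq]; ring
      rw [h1]
      have h4 : ∑ i, (p2 i + t2 i) = (∑ i, (u i ^ 2 / s - u i)) / 2 := by
        rw [Finset.sum_div]
        exact Finset.sum_congr rfl fun i _ => by simp only [p2, t2]; ring
      rw [mul_add]
      linarith
  have hhalf : (1 / 2 : ENNReal) ≤ stdGaussian n ((Prod.mk w ⁻¹' (B1 ∪ B2))ᶜ) := by
    have hmw : MeasurableSet (Prod.mk w ⁻¹' (B1 ∪ B2)) := measurable_prodMk_left hBm
    rw [prob_compl_eq_one_sub hmw]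
    have h1 : (1 : ENNReal) - 1 / 2 ≤ 1 - stdGaussian n (Prod.mk w ⁻¹' (B1 ∪ B2)) :=
      tsub_le_tsub_left hcon.le 1
    refine le_trans (le_of_eq ?_) h1
    simp
  have hfin : ENNReal.ofReal (rexp (-(n * (Rstar * Real.log 2 + ε))) / 2) ≤ stdGaussian n A := by
    refine le_trans ?_ hchg
    rw [div_eq_mul_one_div, ENNReal.ofReal_mul (Real.exp_pos _).le]
    refine mul_le_mul_right (le_trans ?_ (hhalf.trans (measure_mono hsub))) _
    rw [ENNReal.ofReal_div_of_pos (by norm_num)]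
    simp
  exact absurd hw (not_lt.mpr hfin)

/-! ### Diagonalisation -/

lemma aux_dSig {n : ℕ} (U : Matrix (Fin n) (Fin n) ℝ) (lam : Fin n → ℝ) (w v : Fin n → ℝ) :
    dSig (U * Matrix.diagonal lam * Uᵀ) w v =
      ∑ i, lam i * ((Uᵀ *ᵥ w) i - (Uᵀ *ᵥ v) i) ^ 2 := by
  unfold dSig
  rw [Matrix.mul_assoc, ← Matrix.mulVec_mulVec, ← Matrix.mulVec_mulVec, Matrix.dotProduct_mulVec,
    ← Matrix.mulVec_transpose, Matrix.mulVec_sub]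
  simp only [dotProduct, Matrix.mulVec_diagonal, Pi.sub_apply]
  exact Finset.sum_congr rfl fun i _ => by ring

lemma aux_lam_nonneg {n : ℕ} (U : Matrix (Fin n) (Fin n) ℝ) (hU : U * Uᵀ = 1) (lam : Fin n → ℝ)
    (h : (U * Matrix.diagonal lam * Uᵀ).PosSemidef) (i : Fin n) : 0 ≤ lam i := by
  have hU' : Uᵀ * U = 1 := mul_eq_one_comm.mp hU
  have h1 := h.dotProduct_mulVec_nonneg (U *ᵥ Pi.single i 1)
  have h2 := aux_dSig U lam (U *ᵥ Pi.single i 1) 0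
  unfold dSig at h2
  simp only [sub_zero, Matrix.mulVec_mulVec, hU', Matrix.one_mulVec, Matrix.mulVec_zero,
    Pi.zero_apply] at h2
  have h3 : star (U *ᵥ Pi.single i 1) = U *ᵥ (Pi.single i 1 : Fin n → ℝ) := by
    ext j; simp
  rw [h3, Matrix.mulVec_mulVec, h2] at h1
  rw [Finset.sum_eq_single i] at h1
  · simpa using h1
  · intro j _ hj; simp [Pi.single_eq_of_ne hj]
  · simp

lemma aux_lam_sum {n : ℕ} (U : Matrix (Fin n) (Fin n) ℝ) (hU : U * Uᵀ = 1) (lam : Fin n → ℝ)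
    (h : (U * Matrix.diagonal lam * Uᵀ).trace = n) : ∑ i, lam i = n := by
  have hU' : Uᵀ * U = 1 := mul_eq_one_comm.mp hU
  rw [Matrix.trace_mul_comm, ← Matrix.mul_assoc, hU', Matrix.one_mul, Matrix.trace_diagonal] at h
  exact h

lemma aux_rot_core {n : ℕ} (U : Matrix (Fin n) (Fin n) ℝ) (hU : U * Uᵀ = 1) (lam : Fin n → ℝ)
    (σ D : ℝ) (q δ : ENNReal)
    (h : stdGaussian n {w | stdGaussian n {G | ∑ i, lam i * (w i - σ * G i) ^ 2 ≤ D} < q} ≤ δ) :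
    stdGaussian n {w | stdGaussian n
      {G | dSig (U * Matrix.diagonal lam * Uᵀ) w (σ • G) ≤ D} < q} ≤ δ := by
  have hmp := aux_rot Uᵀ (by rw [Matrix.transpose_transpose]; exact hU)
  have hAm : MeasurableSet {z : (Fin n → ℝ) × (Fin n → ℝ) |
      ∑ i, lam i * (z.1 i - σ * z.2 i) ^ 2 ≤ D} :=
    measurableSet_le (by fun_prop) (by fun_prop)
  have hin : ∀ w : Fin n → ℝ, stdGaussian n
      {G | dSig (U * Matrix.diagonal lam * Uᵀ) w (σ • G) ≤ D} =
      stdGaussian n {G | ∑ i, lam i * ((Uᵀ *ᵥ w) i - σ * G i) ^ 2 ≤ D} := fun w => by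
    have hm : MeasurableSet {G : Fin n → ℝ | ∑ i, lam i * ((Uᵀ *ᵥ w) i - σ * G i) ^ 2 ≤ D} :=
      measurableSet_le (by fun_prop) (by fun_prop)
    rw [← hmp.measure_preimage hm.nullMeasurableSet]
    congr 1
    ext G
    simp only [Set.mem_ofPred_eq, Set.mem_preimage, aux_dSig, Matrix.mulVec_smul, Pi.smul_apply,
      smul_eq_mul]
  simp_rw [hin]
  have hm2 : MeasurableSet {w : Fin n → ℝ | stdGaussian n
      {G | ∑ i, lam i * (w i - σ * G i) ^ 2 ≤ D} < q} :=
    measurableSet_lt (measurable_measure_prodMk_left (ν := stdGaussian n) hAm) measurable_const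
  rw [← hmp.measure_preimage hm2.nullMeasurableSet] at h
  exact h

/-! ### Random codebooks -/

lemma aux_codebook {n M : ℕ} (A : Set ((Fin n → ℝ) × (Fin n → ℝ))) (hA : MeasurableSet A)
    (q : ℝ) (hq0 : 0 ≤ q) (hq1 : q ≤ 1) (δ : ℝ) (hδ : 0 < δ) :
    MeasurableSet {Z : Fin M → Fin n → ℝ | ENNReal.ofReal δ ≤ stdGaussian n
      {w | ENNReal.ofReal q ≤ stdGaussian n {G | (w, G) ∈ A} ∧ ∀ l, (w, Z l) ∉ A}} ∧
    (Measure.pi fun _ : Fin M => stdGaussian n) {Z | ENNReal.ofReal δ ≤ stdGaussian n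
      {w | ENNReal.ofReal q ≤ stdGaussian n {G | (w, G) ∈ A} ∧ ∀ l, (w, Z l) ∉ A}} ≤
      ENNReal.ofReal (rexp (-(q * M)) / δ) := by
  have hmA : Measurable (fun w : Fin n → ℝ => stdGaussian n {G | (w, G) ∈ A}) :=
    measurable_measure_prodMk_left (ν := stdGaussian n) hA
  set W0 : Set (Fin n → ℝ) := {w | ENNReal.ofReal q ≤ stdGaussian n {G | (w, G) ∈ A}} with hW0
  have hW0m : MeasurableSet W0 := measurableSet_le measurable_const hmA
  set P := (Measure.pi fun _ : Fin M => stdGaussian n) with hP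
  let S : Set ((Fin M → Fin n → ℝ) × (Fin n → ℝ)) :=
    {z | z.2 ∈ W0 ∧ ∀ l, (z.2, z.1 l) ∉ A}
  have hS : MeasurableSet S := by
    have h1 : S = (Prod.snd ⁻¹' W0) ∩ ⋂ l, (fun z : (Fin M → Fin n → ℝ) × (Fin n → ℝ) =>
        (z.2, z.1 l)) ⁻¹' Aᶜ := by
      ext z; simp [S]
    rw [h1]
    refine (measurable_snd hW0m).inter (MeasurableSet.iInter fun l => ?_)
    exact (by fun_prop : Measurable (fun z : (Fin M → Fin n → ℝ) × (Fin n → ℝ) =>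
        (z.2, z.1 l))) hA.compl
  have hmS : Measurable (fun Z => stdGaussian n (Prod.mk Z ⁻¹' S)) :=
    measurable_measure_prodMk_left (ν := stdGaussian n) hS
  have hset : ∀ Z : Fin M → Fin n → ℝ, {w | ENNReal.ofReal q ≤ stdGaussian n {G | (w, G) ∈ A} ∧
      ∀ l, (w, Z l) ∉ A} = Prod.mk Z ⁻¹' S := fun Z => rfl
  simp_rw [hset]
  refine ⟨measurableSet_le measurable_const hmS, ?_⟩
  have h1 := mul_meas_ge_le_lintegral (μ := P) hmS (ENNReal.ofReal δ)
  have h2 : ∫⁻ Z, stdGaussian n (Prod.mk Z ⁻¹' S) ∂P ≤ ENNReal.ofReal (rexp (-(q * M))) := by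
    rw [← Measure.prod_apply hS, Measure.prod_apply_symm hS]
    have hpt : ∀ w, P ((fun Z => (Z, w)) ⁻¹' S) ≤ ENNReal.ofReal (rexp (-(q * M))) := fun w => by
      by_cases hw : w ∈ W0
      · have h3 : ((fun Z => (Z, w)) ⁻¹' S) = Set.univ.pi fun _ : Fin M => {G | (w, G) ∈ A}ᶜ := by
          ext Z; simp [S, hw]
        have hmw : MeasurableSet {G | (w, G) ∈ A} := measurable_prodMk_left hA
        rw [h3, hP, Measure.pi_pi, Finset.prod_const, prob_compl_eq_one_sub hmw]
        have hw' : ENNReal.ofReal q ≤ stdGaussian n {G | (w, G) ∈ A} := hw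
        have h4 : 1 - stdGaussian n {G | (w, G) ∈ A} ≤ ENNReal.ofReal (1 - q) := by
          rw [ENNReal.ofReal_sub _ hq0, ENNReal.ofReal_one]
          exact tsub_le_tsub_left hw' 1
        refine (pow_le_pow_left₀ zero_le h4 _).trans ?_
        rw [← ENNReal.ofReal_pow (by linarith)]
        refine ENNReal.ofReal_le_ofReal ?_
        simp only [Finset.card_univ, Fintype.card_fin]
        have h5 : 1 - q ≤ rexp (-q) := by linarith [Real.add_one_le_exp (-q)]
        refine (pow_le_pow_left₀ (by linarith) h5 M).trans (le_of_eq ?_)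
        rw [← Real.exp_nat_mul]; congr 1; ring
      · have h3 : ((fun Z => (Z, w)) ⁻¹' S) = ∅ := by
          ext Z; simp [S, hw]
        rw [h3]; simp
    refine (lintegral_mono hpt).trans ?_
    simp
  rw [ENNReal.ofReal_div_of_pos hδ, ENNReal.le_div_iff_mul_le (Or.inl (by simpa using hδ))
    (Or.inl (by simp)), mul_comm]
  exact h1.trans h2

/-- Fourth moment of the standard Gaussian. -/
noncomputable def m4 : ℝ := ∫ x, (x * x) ^ 2 ∂g1

lemma aux_m4_int : Integrable (fun x : ℝ => (x * x) ^ 2) g1 :=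
  (aux_mul_L2 (ProbabilityTheory.memLp_id_gaussianReal' (μ := 0) (v := 1) 4 (by simp))
    (ProbabilityTheory.memLp_id_gaussianReal' (μ := 0) (v := 1) 4 (by simp))).integrable_sq

lemma aux_m4_rot {n : ℕ} (U : Matrix (Fin n) (Fin n) ℝ) (hU : U * Uᵀ = 1) (i : Fin n) :
    Integrable (fun w => ((Uᵀ *ᵥ w) i * (Uᵀ *ᵥ w) i) ^ 2) (stdGaussian n) ∧
    ∫ w, ((Uᵀ *ᵥ w) i * (Uᵀ *ᵥ w) i) ^ 2 ∂(stdGaussian n) = m4 := by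
  have hmp := aux_rot Uᵀ (by rw [Matrix.transpose_transpose]; exact hU)
  have hmp2 : MeasurePreserving (Function.eval i) (stdGaussian n) g1 :=
    measurePreserving_eval (fun _ : Fin n => g1) i
  have hmp3 : MeasurePreserving (fun w => (Uᵀ *ᵥ w) i) (stdGaussian n) g1 := hmp2.comp hmp
  constructor
  · exact hmp3.integrable_comp_of_integrable aux_m4_int
  · unfold m4
    have h1 := hmp3.map_eq
    have h2 : AEStronglyMeasurable (fun x : ℝ => (x * x) ^ 2)
        (Measure.map (fun w => (Uᵀ *ᵥ w) i) (stdGaussian n)) := by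
      rw [h1]; exact aux_m4_int.aestronglyMeasurable
    have h3 := integral_map hmp3.measurable.aemeasurable h2
    rw [h1] at h3
    exact h3.symm

/-- If a code is good outside a small set `Bad` and never worse than the zero word,
its mean distortion is small. -/
lemma aux_mean {n : ℕ} (hn : 0 < n) (U : Matrix (Fin n) (Fin n) ℝ) (hU : U * Uᵀ = 1)
    (lam : Fin n → ℝ) (h0 : ∀ i, 0 ≤ lam i) (hs : ∑ i, lam i = n)
    (F : (Fin n → ℝ) → ℝ) (hF0 : ∀ w, 0 ≤ F w) (D a : ℝ) (hD : 0 ≤ D) (ha : 0 < a)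
    (Bad : Set (Fin n → ℝ)) (hBad : MeasurableSet Bad)
    (hgood : ∀ w, w ∉ Bad → F w ≤ D)
    (hzero : ∀ w, F w ≤ (1 / (n : ℝ)) * dSig (U * Matrix.diagonal lam * Uᵀ) w 0) :
    ∫ w, F w ∂(stdGaussian n) ≤ D + a * m4 / 2 + (stdGaussian n).real Bad / (2 * a) := by
  have hn' : (0 : ℝ) < n := by exact_mod_cast hn
  let H : (Fin n → ℝ) → ℝ := fun w =>
    D + ∑ i, (lam i / n) * (a / 2 * ((Uᵀ *ᵥ w) i * (Uᵀ *ᵥ w) i) ^ 2 +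
      1 / (2 * a) * Bad.indicator (fun _ => (1 : ℝ)) w)
  have hind : Integrable (fun w => Bad.indicator (fun _ => (1 : ℝ)) w) (stdGaussian n) :=
    (integrable_const (1 : ℝ)).indicator hBad
  have hi1 : ∀ i, Integrable (fun w => a / 2 * ((Uᵀ *ᵥ w) i * (Uᵀ *ᵥ w) i) ^ 2)
      (stdGaussian n) := fun i => (aux_m4_rot U hU i).1.const_mul _
  have hi2 : Integrable (fun w => 1 / (2 * a) * Bad.indicator (fun _ => (1 : ℝ)) w)
      (stdGaussian n) := hind.const_mul _
  have hi3 : ∀ i, Integrable (fun w => (lam i / n) * (a / 2 * ((Uᵀ *ᵥ w) i * (Uᵀ *ᵥ w) i) ^ 2 +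
      1 / (2 * a) * Bad.indicator (fun _ => (1 : ℝ)) w)) (stdGaussian n) := fun i =>
    ((hi1 i).add hi2).const_mul _
  have hi4 : Integrable (fun w => ∑ i, (lam i / n) * (a / 2 * ((Uᵀ *ᵥ w) i * (Uᵀ *ᵥ w) i) ^ 2 +
      1 / (2 * a) * Bad.indicator (fun _ => (1 : ℝ)) w)) (stdGaussian n) :=
    integrable_finsetSum _ fun i _ => hi3 i
  have hH : Integrable H (stdGaussian n) := (integrable_const D).add hi4
  have hFH : ∀ w, F w ≤ H w := fun w => by
    by_cases hw : w ∈ Bad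
    · refine (hzero w).trans ?_
      rw [aux_dSig, Finset.mul_sum]
      simp only [H, Set.indicator_of_mem hw, Matrix.mulVec_zero, Pi.zero_apply, sub_zero, mul_one]
      have : ∀ i, 1 / (n : ℝ) * (lam i * (Uᵀ *ᵥ w) i ^ 2) ≤
          lam i / n * (a / 2 * ((Uᵀ *ᵥ w) i * (Uᵀ *ᵥ w) i) ^ 2 + 1 / (2 * a)) := fun i => by
        have h1 : (Uᵀ *ᵥ w) i ^ 2 ≤
            a / 2 * ((Uᵀ *ᵥ w) i * (Uᵀ *ᵥ w) i) ^ 2 + 1 / (2 * a) := by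
          have h2 : a / 2 * ((Uᵀ *ᵥ w) i * (Uᵀ *ᵥ w) i) ^ 2 + 1 / (2 * a) - (Uᵀ *ᵥ w) i ^ 2 =
              (a * ((Uᵀ *ᵥ w) i) ^ 2 - 1) ^ 2 / (2 * a) := by
            field_simp; ring
          have h3 : 0 ≤ (a * ((Uᵀ *ᵥ w) i) ^ 2 - 1) ^ 2 / (2 * a) := by positivity
          linarith
        have h4 : 1 / (n : ℝ) * (lam i * (Uᵀ *ᵥ w) i ^ 2) = lam i / n * (Uᵀ *ᵥ w) i ^ 2 := by ring
        rw [h4]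
        exact mul_le_mul_of_nonneg_left h1 (div_nonneg (h0 i) hn'.le)
      have h5 := Finset.sum_le_sum (s := Finset.univ) fun i _ => this i
      linarith
    · refine (hgood w hw).trans ?_
      simp only [H]
      have : 0 ≤ ∑ i, (lam i / n) * (a / 2 * ((Uᵀ *ᵥ w) i * (Uᵀ *ᵥ w) i) ^ 2 +
          1 / (2 * a) * Bad.indicator (fun _ => (1 : ℝ)) w) := by
        rw [Set.indicator_of_notMem hw]
        refine Finset.sum_nonneg fun i _ => mul_nonneg (div_nonneg (h0 i) hn'.le) ?_
        positivity
      linarith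
  have hmono := integral_mono_of_nonneg (μ := stdGaussian n)
    (Filter.Eventually.of_forall hF0) hH (Filter.Eventually.of_forall hFH)
  refine hmono.trans (le_of_eq ?_)
  simp only [H]
  rw [integral_add (integrable_const D) hi4, integral_finsetSum _ fun i _ => hi3 i]
  have h6 : ∀ i, ∫ w, (lam i / n) * (a / 2 * ((Uᵀ *ᵥ w) i * (Uᵀ *ᵥ w) i) ^ 2 +
      1 / (2 * a) * Bad.indicator (fun _ => (1 : ℝ)) w) ∂(stdGaussian n) =
      lam i / n * (a * m4 / 2 + (stdGaussian n).real Bad / (2 * a)) := fun i => by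
    rw [integral_const_mul, integral_add (hi1 i) hi2, integral_const_mul, integral_const_mul,
      (aux_m4_rot U hU i).2, integral_indicator_const _ hBad]
    simp only [smul_eq_mul, mul_one]
    ring
  simp_rw [h6]
  rw [← Finset.sum_mul, ← Finset.sum_div, hs, div_self hn'.ne']
  simp
  ring

/-! ### The numerical inequalities -/

lemma aux_num (c ε1 δ B : ℝ) (K : ℕ) (hc : 0 < c) (hε : 0 < ε1) (hδ : 0 < δ) (hK : 0 < K) :
    ∃ n1 : ℕ, ∀ n : ℕ, n1 ≤ n → 1 ≤ n ∧
      K * ⌈rexp (n * (c + 2 * ε1))⌉₊ + 1 ≤ ⌊rexp (n * (c + 4 * ε1))⌋₊ ∧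
      rexp (-(rexp (-(n * (c + ε1))) / 2 * (⌈rexp (n * (c + 2 * ε1))⌉₊ : ℝ))) / δ ≤
        rexp (-(n : ℝ) ^ B) := by
  have hK' : (1 : ℝ) ≤ K := by exact_mod_cast hK
  have t1 : Filter.Tendsto (fun n : ℕ => rexp ((n : ℝ) * (2 * ε1))) Filter.atTop Filter.atTop :=
    Real.tendsto_exp_atTop.comp
      (tendsto_natCast_atTop_atTop.atTop_mul_const (by positivity))
  have e1 := t1.eventually_ge_atTop (3 * K)
  have t2 : Filter.Tendsto (fun x : ℝ => rexp (ε1 * x) / x ^ B) Filter.atTop Filter.atTop :=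
    tendsto_exp_mul_div_rpow_atTop B ε1 hε
  have e2 := (t2.comp tendsto_natCast_atTop_atTop).eventually_ge_atTop (4 : ℝ)
  have t3 : Filter.Tendsto (fun n : ℕ => rexp (ε1 * (n : ℝ))) Filter.atTop Filter.atTop :=
    Real.tendsto_exp_atTop.comp
      (tendsto_natCast_atTop_atTop.const_mul_atTop hε)
  have e3 := t3.eventually_ge_atTop (4 * (-Real.log δ))
  obtain ⟨n1, h⟩ := Filter.eventually_atTop.mp
    ((Filter.eventually_ge_atTop 1).and (e1.and (e2.and e3)))
  refine ⟨n1, fun n hn => ?_⟩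
  obtain ⟨hn1, h1, h2, h3⟩ := h n hn
  have hn' : (0 : ℝ) < n := by exact_mod_cast hn1
  simp only [Function.comp] at h2
  have hpB : 0 < (n : ℝ) ^ B := Real.rpow_pos_of_pos hn' B
  rw [le_div_iff₀ hpB] at h2
  set x := rexp (n * (c + 2 * ε1)) with hx
  have hx1 : 1 ≤ x := Real.one_le_exp (by positivity)
  have hM1 : (⌈x⌉₊ : ℝ) < x + 1 := Nat.ceil_lt_add_one (by linarith)
  have hM2 : x ≤ (⌈x⌉₊ : ℝ) := Nat.le_ceil x
  refine ⟨hn1, ?_, ?_⟩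
  · refine Nat.le_floor ?_
    push_cast
    have h4 : rexp (n * (c + 4 * ε1)) = x * rexp (n * (2 * ε1)) := by
      rw [hx, ← Real.exp_add]; congr 1; ring
    rw [h4]
    have h5 : x * (3 * K) ≤ x * rexp (n * (2 * ε1)) :=
      mul_le_mul_of_nonneg_left h1 (by linarith)
    have h6 : (K : ℝ) * ⌈x⌉₊ ≤ K * (x + 1) := mul_le_mul_of_nonneg_left hM1.le (by linarith)
    nlinarith
  · have h7 : rexp (ε1 * n) / 2 ≤ rexp (-(n * (c + ε1))) / 2 * (⌈x⌉₊ : ℝ) := by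
      have h8 : rexp (ε1 * n) = rexp (-(n * (c + ε1))) * x := by
        rw [hx, ← Real.exp_add]; congr 1; ring
      rw [h8]
      have := mul_le_mul_of_nonneg_left hM2 (Real.exp_pos (-(n * (c + ε1)))).le
      linarith
    rw [div_le_iff₀ hδ]
    have h9 : rexp (-(n : ℝ) ^ B) * δ = rexp (-(n : ℝ) ^ B + Real.log δ) := by
      rw [Real.exp_add, Real.exp_log hδ]
    rw [h9]
    refine Real.exp_le_exp.mpr ?_
    linarith

/-! ### The code -/

lemma aux_unif (T : Set ℝ) (Good : Set unitInterval) (h : ∀ u ∈ Good, (u : ℝ) ∈ T)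
    (p : ℝ) (hp : ENNReal.ofReal p ≤ (volume : Measure unitInterval) Good) :
    p ≤ ((volume.restrict (Set.Icc (0 : ℝ) 1)) T).toReal := by
  have h1 : (volume : Measure unitInterval) Good ≤ (volume.restrict (Set.Icc (0 : ℝ) 1)) T := by
    have h2 : Measure.map ((↑) : unitInterval → ℝ) volume =
        volume.restrict (Set.Icc (0 : ℝ) 1) := by
      have := map_comap_subtype_coe (μ := (volume : Measure ℝ))
        (measurableSet_Icc (a := (0 : ℝ)) (b := 1))
      exact this
    rw [← h2, (MeasurableEmbedding.subtype_coe measurableSet_Icc).map_apply]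
    exact measure_mono fun u hu => h u hu
  exact (ENNReal.ofReal_le_iff_le_toReal (measure_ne_top _ _)).mp (hp.trans h1)

lemma aux_code {n K M N : ℕ} (hn : 0 < n) (hN : K * M + 1 ≤ N) (q δ a : ℝ)
    (hq0 : 0 ≤ q) (hq1 : q ≤ 1) (hδ : 0 < δ) (ha : 0 < a) :
    ∃ (f : (Fin n → ℝ) → Matrix (Fin n) (Fin n) ℝ → ℝ → Fin N)
      (g : Fin N → ℝ → (Fin n → ℝ)),
      ∀ (U : Matrix (Fin n) (Fin n) ℝ), U * Uᵀ = 1 → ∀ lam : Fin n → ℝ, (∀ i, 0 ≤ lam i) →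
      ∑ i, lam i = n → ∀ D : ℝ, 0 ≤ D → ∀ k : Fin K,
      stdGaussian n {w | stdGaussian n {G | ∑ i, lam i *
        (w i - √(((k : ℕ) + 1 : ℝ) / K) * G i) ^ 2 ≤ n * D} < ENNReal.ofReal q} ≤
          ENNReal.ofReal δ →
      1 - rexp (-(q * M)) / δ ≤ ((volume.restrict (Set.Icc (0 : ℝ) 1))
        {s : ℝ | (∫ w, (1 / (n : ℝ)) * dSig (U * Matrix.diagonal lam * Uᵀ) w
            (g (f w (U * Matrix.diagonal lam * Uᵀ) s) s) ∂(stdGaussian n))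
              ≤ D + a * m4 / 2 + δ / a}).toReal := by
  classical
  have hn' : (0 : ℝ) < n := by exact_mod_cast hn
  -- enumeration of the codewords
  obtain ⟨e, he⟩ : ∃ e : Fin N → Option (Fin K × Fin M), Function.Surjective e := by
    have hcard : Fintype.card (Option (Fin K × Fin M)) ≤ Fintype.card (Fin N) := by
      simpa using hN
    obtain ⟨i⟩ := Function.Embedding.nonempty_of_card_le hcard
    exact ⟨Function.invFun i, Function.invFun_surjective i.injective⟩
  -- the random codebook as a function of the seed
  obtain ⟨Zmap, hZm, hZ⟩ := MeasureTheory.Measure.exists_measurable_map_eq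
    (Measure.pi fun _ : Fin M => stdGaussian n)
  let cw : Option (Fin K × Fin M) → unitInterval → (Fin n → ℝ) := fun o u =>
    match o with
    | none => 0
    | some p => √(((p.1 : ℕ) + 1 : ℝ) / K) • Zmap u p.2
  let g : Fin N → ℝ → (Fin n → ℝ) := fun j s => cw (e j) (Set.projIcc 0 1 zero_le_one s)
  have hne : Nonempty (Fin N) := ⟨⟨0, by omega⟩⟩
  have hmin : ∀ (w : Fin n → ℝ) (Sig : Matrix (Fin n) (Fin n) ℝ) (s : ℝ),
      ∃ j : Fin N, ∀ j', dSig Sig w (g j s) ≤ dSig Sig w (g j' s) := fun w Sig s =>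
    Finite.exists_min fun j => dSig Sig w (g j s)
  choose f hf using hmin
  refine ⟨f, g, fun U hU lam h0 hs D hD k hk => ?_⟩
  set Sig := U * Matrix.diagonal lam * Uᵀ with hSig
  set σ := √(((k : ℕ) + 1 : ℝ) / K) with hσ
  have hk2 := aux_rot_core U hU lam σ (n * D) _ _ hk
  rw [← hSig] at hk2
  let A : Set ((Fin n → ℝ) × (Fin n → ℝ)) := {z | dSig Sig z.1 (σ • z.2) ≤ n * D}
  have hA : MeasurableSet A := by
    have hc : Continuous fun z : (Fin n → ℝ) × (Fin n → ℝ) => dSig Sig z.1 (σ • z.2) := by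
      simp only [hSig, aux_dSig]
      simp only [Matrix.mulVec, dotProduct]
      fun_prop
    exact measurableSet_le hc.measurable measurable_const
  obtain ⟨hBm, hB⟩ := aux_codebook (M := M) A hA q hq0 hq1 δ hδ
  set BZ : Set (Fin M → Fin n → ℝ) := {Z | ENNReal.ofReal δ ≤ stdGaussian n
      {w | ENNReal.ofReal q ≤ stdGaussian n {G | (w, G) ∈ A} ∧ ∀ l, (w, Z l) ∉ A}} with hBZ
  refine aux_unif _ (Zmap ⁻¹' BZᶜ) ?_ _ ?_
  · intro u hu
    have hu' : stdGaussian n {w | ENNReal.ofReal q ≤ stdGaussian n {G | (w, G) ∈ A} ∧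
        ∀ l, (w, Zmap u l) ∉ A} < ENNReal.ofReal δ := by
      have : ¬ (ENNReal.ofReal δ ≤ _) := hu
      exact not_le.mp this
    have hgu : ∀ j, g j (u : ℝ) = cw (e j) u := fun j => by
      simp only [g, Set.projIcc_val]
    let Bad : Set (Fin n → ℝ) := {w | ∀ l, (w, Zmap u l) ∉ A}
    have hBadm : MeasurableSet Bad := by
      have : Bad = ⋂ l, (fun w => (w, Zmap u l)) ⁻¹' Aᶜ := by
        ext w; simp [Bad]
      rw [this]
      exact MeasurableSet.iInter fun l => measurable_prodMk_right hA.compl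
    have hBadle : stdGaussian n Bad ≤ ENNReal.ofReal (2 * δ) := by
      have hsub : Bad ⊆ {w | stdGaussian n {G | dSig Sig w (σ • G) ≤ n * D} < ENNReal.ofReal q} ∪
          {w | ENNReal.ofReal q ≤ stdGaussian n {G | (w, G) ∈ A} ∧ ∀ l, (w, Zmap u l) ∉ A} := by
        intro w hw
        by_cases hc : ENNReal.ofReal q ≤ stdGaussian n {G | (w, G) ∈ A}
        · exact Or.inr ⟨hc, hw⟩
        · exact Or.inl (not_le.mp hc)
      refine (measure_mono hsub).trans ((measure_union_le _ _).trans ?_)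
      rw [two_mul, ENNReal.ofReal_add hδ.le hδ.le]
      exact add_le_add hk2 hu'.le
    have hBadr : (stdGaussian n).real Bad ≤ 2 * δ :=
      ENNReal.toReal_le_of_le_ofReal (by positivity) hBadle
    have hmean := aux_mean hn U hU lam h0 hs
      (fun w => (1 / (n : ℝ)) * dSig Sig w (g (f w Sig (u : ℝ)) (u : ℝ))) (fun w => by
        rw [hSig, aux_dSig]
        exact mul_nonneg (by positivity)
          (Finset.sum_nonneg fun i _ => mul_nonneg (h0 i) (sq_nonneg _)))
      D a hD ha Bad hBadm (fun w hw => by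
        have : ∃ l, (w, Zmap u l) ∈ A := by
          by_contra hcon
          push Not at hcon
          exact hw hcon
        obtain ⟨l, hl⟩ := this
        obtain ⟨j, hj⟩ := he (some (k, l))
        have h1 := hf w Sig (u : ℝ) j
        have h2 : g j (u : ℝ) = σ • Zmap u l := by rw [hgu, hj]
        rw [h2] at h1
        have h3 : dSig Sig w (σ • Zmap u l) ≤ n * D := hl
        rw [one_div, inv_mul_le_iff₀ hn']
        exact h1.trans h3)
      (fun w => by
        obtain ⟨j, hj⟩ := he none
        have h1 := hf w Sig (u : ℝ) j
        have h2 : g j (u : ℝ) = 0 := by rw [hgu, hj]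
        rw [h2] at h1
        exact mul_le_mul_of_nonneg_left h1 (by positivity))
    refine hmean.trans ?_
    have : (stdGaussian n).real Bad / (2 * a) ≤ δ / a := by
      rw [div_le_div_iff₀ (by positivity) ha]
      nlinarith
    linarith
  · rw [← Measure.map_apply hZm hBm.compl, hZ, prob_compl_eq_one_sub hBm,
      ENNReal.ofReal_sub _ (by positivity), ENNReal.ofReal_one]
    exact tsub_le_tsub_left hB 1
/-- achievability of the random-coding rate-distortion tradeoff for a
Gaussian input, for each fixed PSD `Σ` of trace `n`, with probability
`≥ 1 - exp(-n^B)` over the shared randomness `S`. -/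
theorem stmt_5 (Rstar ε η B : ℝ) (hRstar : 0 < Rstar) (hε : 0 < ε) (hη : 0 < η) (hB : 0 < B) :
    ∃ n₀ : ℕ, ∀ n : ℕ, n₀ ≤ n →
      ∃ (R : ℝ) (f : (Fin n → ℝ) → Matrix (Fin n) (Fin n) ℝ → ℝ →
            Fin ⌊(2 : ℝ) ^ ((n : ℝ) * R)⌋₊)
        (g : Fin ⌊(2 : ℝ) ^ ((n : ℝ) * R)⌋₊ → ℝ → (Fin n → ℝ)),
        R ≤ Rstar + ε ∧
        ∀ (Sig : Matrix (Fin n) (Fin n) ℝ), Sig.PosSemidef → Sig.trace = (n : ℝ) →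
        ∀ (U : Matrix (Fin n) (Fin n) ℝ), U * Uᵀ = 1 →
        ∀ lam : Fin n → ℝ, Sig = U * Matrix.diagonal lam * Uᵀ →
          1 - Real.exp (-(n : ℝ) ^ B) ≤
            ((volume.restrict (Set.Icc (0 : ℝ) 1))
              {s : ℝ |
                (∫ w, (1 / (n : ℝ)) * dSig Sig w (g (f w Sig s) s) ∂(stdGaussian n))
                  ≤ DDrc lam Rstar + η}).toReal := by
  have hm4 : 0 ≤ m4 := integral_nonneg fun x => sq_nonneg _
  have hl2 : 0 < Real.log 2 := Real.log_pos one_lt_two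
  obtain ⟨a, ha, ham⟩ : ∃ a : ℝ, 0 < a ∧ a * m4 / 2 ≤ η / 4 := by
    refine ⟨η / (2 * (m4 + 1)), by positivity, ?_⟩
    have h1 : η / (2 * (m4 + 1)) * m4 ≤ η / 2 := by
      rw [div_mul_eq_mul_div, div_le_div_iff₀ (by positivity) (by positivity)]
      nlinarith
    linarith
  set δ := a * (η / 4) with hδd
  have hδ : 0 < δ := by positivity
  have hδa : δ / a = η / 4 := by rw [hδd]; field_simp
  set ε1 := ε * Real.log 2 / 4 with hε1
  have hε1p : 0 < ε1 := by positivity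
  obtain ⟨K, hK, n0, hcore⟩ := aux_core Rstar ε1 (η / 2) δ hRstar hε1p (by positivity) hδ
  obtain ⟨n1, hnum⟩ := aux_num (Rstar * Real.log 2) ε1 δ B K (by positivity) hε1p hδ hK
  refine ⟨max n0 n1, fun n hn => ?_⟩
  obtain ⟨hn1, hN, hexp⟩ := hnum n (le_trans (le_max_right _ _) hn)
  have hcn := hcore n (le_trans (le_max_left _ _) hn)
  have hn' : (0 : ℝ) < n := by exact_mod_cast hn1
  have hpow : (2 : ℝ) ^ ((n : ℝ) * (Rstar + ε)) =
      rexp (n * (Rstar * Real.log 2 + 4 * ε1)) := by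
    rw [Real.rpow_def_of_pos two_pos]; congr 1; rw [hε1]; ring
  rw [← hpow] at hN
  have hq1 : rexp (-(n * (Rstar * Real.log 2 + ε1))) / 2 ≤ 1 := by
    have : rexp (-(n * (Rstar * Real.log 2 + ε1))) ≤ 1 :=
      Real.exp_le_one_iff.mpr (by
        have : 0 ≤ n * (Rstar * Real.log 2 + ε1) := by positivity
        linarith)
    linarith
  obtain ⟨f, g, hfg⟩ := aux_code (by omega : 0 < n) hN
    (rexp (-(n * (Rstar * Real.log 2 + ε1))) / 2) δ a (by positivity) hq1 hδ ha
  refine ⟨Rstar + ε, f, g, le_rfl, fun Sig hPSD htr U hU lam hSig => ?_⟩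
  subst hSig
  have h0 := aux_lam_nonneg U hU lam hPSD
  have hs := aux_lam_sum U hU lam htr
  obtain ⟨k, hk⟩ := hcn lam h0 hs
  have hT := (aux_Trc (by omega) lam h0 hs Rstar hRstar).1
  have hD : 0 ≤ DDrc lam Rstar := by
    unfold DDrc Drc
    refine mul_nonneg (by positivity) (Finset.sum_nonneg fun i _ => ?_)
    have h2 : 0 ≤ lam i * Trc lam Rstar := mul_nonneg (h0 i) hT.le
    exact div_nonneg (h0 i) (by linarith)
  have hfin := hfg U hU lam h0 hs (DDrc lam Rstar + η / 2) (by linarith) k hk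
  refine le_trans (by linarith) (hfin.trans ?_)
  refine ENNReal.toReal_mono (measure_ne_top _ _) (measure_mono fun s hs' => ?_)
  simp only [Set.mem_ofPred_eq] at hs' ⊢
  linarith
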